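/- arXiv:1710.09143 — 2 statements merged into one kernel-verified Lean document; each statement's English description precedes it below -/
import Mathlib

section
/- There exists a constant c₀ > 0 such that for every prime power q and all integers d ≥ 1, k ≥ 2, the multicolor discrepancy of the trace function satisfies −log₂ disc_k(T_{q,d,k}) ≥ c₀ · d² · log₂ q / (k² · 2^k). -/
/-- Transcript of `c` bits, each bit determined from the previous transcript. -/
def buildTranscript (step : List Bool → Bool) : ℕ → List Bool
  | 0 => []
  | m + 1 => buildTranscript step m ++ [step (buildTranscript step m)]

/-- A deterministic number-on-the-forehead style protocol with `k` players on input
space `I`, where `Vis i x x'` means player `i` cannot distinguish the inputs `x` and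
`x'` (player `i` sees everything except their own input).  The protocol runs for
exactly `c` rounds; in each round a speaker, determined by the transcript so far,
writes one bit on the blackboard, and this bit may depend only on the part of the
input that the speaker sees.  The output is determined by the full transcript. -/
structure DProt (k : ℕ) (I : Type) (Vis : Fin k → I → I → Prop) (Y : Type) (c : ℕ) where
  speaker : List Bool → Fin k
  msg : List Bool → I → Bool
  msg_nof : ∀ t x x', Vis (speaker t) x x' → msg t x = msg t x'
  out : List Bool → Y

def DProt.run {k I Vis Y c} (P : DProt k I Vis Y c) (x : I) : Y :=
  P.out (buildTranscript (fun t => P.msg t x) c)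

/-- Deterministic NOF communication complexity of `f` restricted to `S`. -/
noncomputable def DCC {k : ℕ} {I Y : Type} (Vis : Fin k → I → I → Prop)
    (f : I → Y) (S : Set I) : ℕ :=
  sInf { c | ∃ P : DProt k I Vis Y c, ∀ x ∈ S, P.run x = f x }

/-- A nondeterministic protocol: a prover first provides a proof string of `a` bits,
after which the players communicate `c` bits as in a deterministic protocol (the bits
may depend on the proof). -/
structure NProt (k : ℕ) (I : Type) (Vis : Fin k → I → I → Prop) (Y : Type) (a c : ℕ) where
  speaker : (Fin a → Bool) → List Bool → Fin k
  msg : (Fin a → Bool) → List Bool → I → Bool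
  msg_nof : ∀ p t x x', Vis (speaker p t) x x' → msg p t x = msg p t x'
  out : (Fin a → Bool) → List Bool → Y

def NProt.run {k I Vis Y a c} (P : NProt k I Vis Y a c) (p : Fin a → Bool) (x : I) : Y :=
  P.out p (buildTranscript (fun t => P.msg p t x) c)

/-- Nondeterministic NOF complexity `N_k(A, S)` of the search problem for `A : I → Y`
restricted to `S`: minimum cost (proof length plus communication) of a protocol which
on every input outputs either a value in `Y` or `none` (i.e. "don't know"), never
outputs a wrong value on inputs in `S`, and on every input of `S` has at least one
proof leading to the correct value. -/
noncomputable def NCC {k : ℕ} {I Y : Type} (Vis : Fin k → I → I → Prop)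
    (A : I → Y) (S : Set I) : ℕ :=
  sInf { m | ∃ a c, m = a + c ∧ ∃ P : NProt k I Vis (Option Y) a c,
    ∀ x ∈ S, (∀ p, P.run p x = none ∨ P.run p x = some (A x)) ∧
      ∃ p, P.run p x = some (A x) }

/-- Nondeterministic NOF complexity `N¹_k(f)` of a boolean function `f`: on every
1-input some proof leads to output `true`, and on every 0-input all proofs lead to
output `false`.  The cost is proof length plus communication. -/
noncomputable def NCCbool {k : ℕ} {I : Type} (Vis : Fin k → I → I → Prop)
    (f : I → Bool) : ℕ :=
  sInf { m | ∃ a c, m = a + c ∧ ∃ P : NProt k I Vis Bool a c,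
    ∀ x, f x = true ↔ ∃ p, P.run p x = true }

/-- Deterministic NOF communication complexity with `b` help bits:
`min` over `t ≤ b` and partitions of the input space into `2 ^ t` parts (given by a
coloring `H`) of `t` plus the maximal complexity of a part. -/
noncomputable def DHelp {k : ℕ} {I Y : Type} (Vis : Fin k → I → I → Prop)
    (A : I → Y) (b : ℕ) : ℕ :=
  sInf { m | ∃ t ≤ b, ∃ H : I → Fin (2 ^ t),
    m = t + Finset.univ.sup fun i => DCC Vis A (H ⁻¹' {i}) }

/-- Nondeterministic NOF communication complexity with `b` help bits. -/
noncomputable def NHelp {k : ℕ} {I Y : Type} (Vis : Fin k → I → I → Prop)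
    (A : I → Y) (b : ℕ) : ℕ :=
  sInf { m | ∃ t ≤ b, ∃ H : I → Fin (2 ^ t),
    m = t + Finset.univ.sup fun i => NCC Vis A (H ⁻¹' {i}) }

/-- A one-way protocol: player `last` first sends a message of `a` bits (depending
only on what they see), after which the remaining players communicate `c` more bits
without the participation of player `last`. -/
structure OWProt (k : ℕ) (I : Type) (Vis : Fin k → I → I → Prop) (Y : Type)
    (last : Fin k) (a c : ℕ) where
  pre : I → Fin a → Bool
  pre_nof : ∀ x x', Vis last x x' → pre x = pre x'
  speaker : (Fin a → Bool) → List Bool → Fin k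
  speaker_ne : ∀ p t, speaker p t ≠ last
  msg : (Fin a → Bool) → List Bool → I → Bool
  msg_nof : ∀ p t x x', Vis (speaker p t) x x' → msg p t x = msg p t x'
  out : (Fin a → Bool) → List Bool → Y

def OWProt.run {k I Vis Y last a c} (P : OWProt k I Vis Y last a c) (x : I) : Y :=
  P.out (P.pre x) (buildTranscript (fun t => P.msg (P.pre x) t x) c)

/-- One-way NOF communication complexity `D¹_k(f)`, where player `last` speaks first
(a single message) and then the other players communicate. -/
noncomputable def OWCC {k : ℕ} {I Y : Type} (Vis : Fin k → I → I → Prop)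
    (f : I → Y) (last : Fin k) : ℕ :=
  sInf { m | ∃ a c, m = a + c ∧ ∃ P : OWProt k I Vis Y last a c, ∀ x, P.run x = f x }

/-- Standard NOF visibility: player `i` sees all coordinates except the `i`-th one. -/
def nofVis (k : ℕ) (W : Type) : Fin k → (Fin k → W) → (Fin k → W) → Prop :=
  fun i x x' => ∀ j, j ≠ i → x j = x' j

/-- NOF visibility for `k` players on inputs in `(Fin (k-1) → W) × Z`: players
`0, …, k-2` hold the coordinates of the first component on their foreheads, and the
`k`-th player (index `k-1`) holds the second component. -/
def liftVis (k : ℕ) (W Z : Type) :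
    Fin k → ((Fin (k - 1) → W) × Z) → ((Fin (k - 1) → W) × Z) → Prop :=
  fun i z z' => (∀ j : Fin (k - 1), (j : ℕ) ≠ (i : ℕ) → z.1 j = z'.1 j) ∧
    ((i : ℕ) = k - 1 ∨ z.2 = z'.2)

/-- `C` is a cylinder in coordinate `i`: membership does not depend on coordinate `i`. -/
def IsCylinder (k : ℕ) (W : Type) (i : Fin k) (C : Set (Fin k → W)) : Prop :=
  ∀ x x', (∀ j, j ≠ i → x j = x' j) → (x ∈ C ↔ x' ∈ C)

/-- `C` is a cylinder intersection: an intersection of cylinders, one per coordinate. -/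
def IsCylinderIntersection (k : ℕ) (W : Type) (C : Set (Fin k → W)) : Prop :=
  ∃ Cs : Fin k → Set (Fin k → W), (∀ i, IsCylinder k W i (Cs i)) ∧ C = ⋂ i, Cs i

/-- `disc(A, S, y) = | |A⁻¹(y) ∩ S| - |S| / N | / |X|` where `N` is the number of
colors and `X` is the input space. -/
noncomputable def discVal (k : ℕ) (W Y : Type) (A : (Fin k → W) → Y)
    (S : Set (Fin k → W)) (y : Y) : ℝ :=
  |(Nat.card ↥(A ⁻¹' {y} ∩ S) : ℝ) - (Nat.card ↥S : ℝ) / (Nat.card Y : ℝ)| /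
    (Nat.card (Fin k → W) : ℝ)

/-- Multicolor discrepancy of `A`: the supremum of `disc(A, S, y)` over all cylinder
intersections `S` and all colors `y`. -/
noncomputable def multiDisc (k : ℕ) (W Y : Type) (A : (Fin k → W) → Y) : ℝ :=
  sSup { d : ℝ | ∃ S y, IsCylinderIntersection k W S ∧ d = discVal k W Y A S y }

/-!
Expanding the indicator of a colour in the additive characters of `F` reduces the discrepancy to
correlations of `ψ (Tr (B₁ ⋯ Bₖ))` with products of cylinder indicators. Each application of
Cauchy–Schwarz removes one cylinder and replaces a matrix by a difference of two independent ones;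
after `k - 1` of them only `B_k` is left in the phase, and averaging over it gives
`disc ^ 2 ^ (k - 1) ≤ ℙ (D₁ ⋯ D_{k-1} = 0)` for independent uniform `Dᵢ`.
Nullity is subadditive under products, so if the product vanishes then some `Dᵢ` has nullity at
least `r ≈ d / (k - 1)`. Since `ℙ (nullity D ≥ r) ≤ 1 / |GL_r(F)|`, which is at most
`√2 q ^ (-r² / 2)`, a union bound finishes the proof, except when `q ^ r²` is only polynomial in
`k`, where the trivial bound `disc ≤ 1 - 1 / q` is good enough.
-/

section Expectation

open scoped BigOperators

lemma expect_fin_cons {W M : Type*} [Fintype W] [AddCommMonoid M] [Module ℚ≥0 M] {n : ℕ}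
    (f : (Fin (n + 1) → W) → M) : 𝔼 B, f B = 𝔼 x, 𝔼 b : Fin n → W, f (Fin.cons x b) := by
  rw [← Fintype.expect_equiv (Fin.consEquiv fun _ ↦ W) (fun z ↦ f (Fin.cons z.1 z.2)) f fun _ ↦ rfl,
    ← Finset.univ_product_univ, Finset.expect_product]

lemma expect_apply_eval {W ι M : Type*} [Fintype W] [Nonempty W] [Fintype ι] [DecidableEq ι]
    [AddCommMonoid M] [Module ℚ≥0 M] (f : W → M) (i : ι) : 𝔼 D : ι → W, f (D i) = 𝔼 x, f x := by
  rw [Fintype.expect_equiv (Equiv.funSplitAt i W) (fun D ↦ f (D i)) (fun z ↦ f z.1) fun _ ↦ rfl,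
    ← Finset.univ_product_univ, Finset.expect_product]
  simp only [Fintype.expect_const]

lemma pow_expect_le_expect_pow {ι : Type*} [Fintype ι] [Nonempty ι] {f : ι → ℝ} (hf : ∀ i, 0 ≤ f i)
    (m : ℕ) : (𝔼 i, f i) ^ m ≤ 𝔼 i, f i ^ m := by
  have h := Real.pow_arith_mean_le_arith_mean_pow Finset.univ
    (fun _ : ι ↦ (Fintype.card ι : ℝ)⁻¹) f (fun _ _ ↦ by positivity) (by simp) (fun i _ ↦ hf i) m
  simpa only [Fintype.expect_eq_sum_div_card, Finset.sum_div, div_eq_inv_mul, ← Finset.mul_sum]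
    using h

lemma expect_norm_sq_expect_le {X W : Type*} [Fintype X] [Fintype W] (h : W → X → ℂ) :
    𝔼 b, ‖𝔼 x, h x b‖ ^ 2 ≤ 𝔼 x, 𝔼 y, ‖𝔼 b, h x b * starRingEnd ℂ (h y b)‖ := by
  have hexpand : ((𝔼 b, ‖𝔼 x, h x b‖ ^ 2 : ℝ) : ℂ) =
      𝔼 x, 𝔼 y, 𝔼 b, h x b * starRingEnd ℂ (h y b) := by
    simp only [Complex.ofReal_expect, Complex.ofReal_pow, ← Complex.mul_conj', map_expect,
      Finset.expect_mul_expect]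
    rw [Finset.expect_comm]
    exact Finset.expect_congr rfl fun x _ ↦ Finset.expect_comm ..
  calc 𝔼 b, ‖𝔼 x, h x b‖ ^ 2
      = ‖𝔼 x, 𝔼 y, 𝔼 b, h x b * starRingEnd ℂ (h y b)‖ := by
        rw [← hexpand, Complex.norm_real, Real.norm_of_nonneg]
        exact Finset.expect_nonneg fun _ _ ↦ by positivity
    _ ≤ 𝔼 x, 𝔼 y, ‖𝔼 b, h x b * starRingEnd ℂ (h y b)‖ :=
        (RCLike.norm_expect_le (K := ℂ)).trans
          (Finset.expect_le_expect fun _ _ ↦ RCLike.norm_expect_le (K := ℂ))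

lemma norm_expect_mul_sq_le {X W : Type*} [Fintype X] [Nonempty X] [Fintype W] {c : X → ℂ}
    (hc : ∀ b, ‖c b‖ ≤ 1) (h : W → X → ℂ) :
    ‖𝔼 b, c b * 𝔼 x, h x b‖ ^ 2 ≤ 𝔼 x, 𝔼 y, ‖𝔼 b, h x b * starRingEnd ℂ (h y b)‖ := by
  have hnorm : ‖𝔼 b, c b * 𝔼 x, h x b‖ ≤ 𝔼 b, ‖𝔼 x, h x b‖ := by
    refine (RCLike.norm_expect_le (K := ℂ)).trans (Finset.expect_le_expect fun b _ ↦ ?_)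
    rw [norm_mul]
    exact mul_le_of_le_one_left (norm_nonneg _) (hc b)
  calc ‖𝔼 b, c b * 𝔼 x, h x b‖ ^ 2 ≤ (𝔼 b, ‖𝔼 x, h x b‖) ^ 2 := by gcongr
    _ ≤ 𝔼 b, ‖𝔼 x, h x b‖ ^ 2 := pow_expect_le_expect_pow (fun _ ↦ norm_nonneg _) 2
    _ ≤ 𝔼 x, 𝔼 y, ‖𝔼 b, h x b * starRingEnd ℂ (h y b)‖ := expect_norm_sq_expect_le h

open Classical in
/-- The probability that a uniformly random element of `Ω` satisfies `p`, encoded as the expectation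
of the indicator; it is `0` when `Ω` is empty. -/
noncomputable def uniformProb {Ω : Type*} [Fintype Ω] (p : Ω → Prop) : ℝ :=
  𝔼 ω, if p ω then 1 else 0

lemma uniformProb_eq_expect {Ω : Type*} [Fintype Ω] (p : Ω → Prop) [DecidablePred p] :
    uniformProb p = 𝔼 ω, if p ω then 1 else 0 := by
  rw [uniformProb]
  congr!

lemma uniformProb_nonneg {Ω : Type*} [Fintype Ω] (p : Ω → Prop) : 0 ≤ uniformProb p :=
  Finset.expect_nonneg fun ω _ ↦ by positivity

lemma uniformProb_eq_card_div {Ω : Type*} [Fintype Ω] (p : Ω → Prop) :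
    uniformProb p = Nat.card {ω // p ω} / Nat.card Ω := by
  classical
  rw [uniformProb_eq_expect, Fintype.expect_eq_sum_div_card, Nat.card_eq_fintype_card,
    Nat.card_eq_fintype_card, Fintype.card_subtype, Finset.natCast_card_filter]

lemma uniformProb_apply_eq_zero {G H : Type*} [AddCommGroup G] [Fintype G] [AddCommGroup H]
    {f : G →+ H} (hf : Function.Surjective f) : uniformProb (f · = 0) = 1 / Nat.card H := by
  have hcard : Nat.card {g // f g = 0} * Nat.card H = Nat.card G := by
    rw [← f.ker.card_mul_index, AddSubgroup.index_ker, AddMonoidHom.range_eq_top.2 hf,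
      AddSubgroup.card_top]
    rfl
  have hG : (Nat.card G : ℝ) ≠ 0 := by exact_mod_cast Nat.card_pos.ne'
  rw [uniformProb_eq_card_div]
  rw [← hcard, Nat.cast_mul, mul_ne_zero_iff] at hG
  rw [← hcard, Nat.cast_mul, div_mul_eq_div_div, div_self hG.1]

lemma uniformProb_fin_cons {W : Type*} [Fintype W] {n : ℕ} (p : (Fin (n + 1) → W) → Prop) :
    uniformProb p = 𝔼 x, uniformProb fun b ↦ p (Fin.cons x b) :=
  expect_fin_cons _

lemma uniformProb_le_card_mul {W ι : Type*} [Fintype W] [Nonempty W] [Fintype ι] [DecidableEq ι]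
    {p : W → Prop} {Q : (ι → W) → Prop} (hQ : ∀ D, Q D → ∃ i, p (D i)) :
    uniformProb Q ≤ Fintype.card ι * uniformProb p := by
  classical
  calc uniformProb Q ≤ 𝔼 D : ι → W, ∑ i, if p (D i) then 1 else 0 := by
        rw [uniformProb_eq_expect]
        refine Finset.expect_le_expect fun D _ ↦ ?_
        split_ifs with h
        · obtain ⟨i, hi⟩ := hQ D h
          exact (if_pos hi).ge.trans
            (Finset.single_le_sum (f := fun i ↦ if p (D i) then (1 : ℝ) else 0)
              (fun _ _ ↦ by positivity) (Finset.mem_univ i))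
        · positivity
    _ = Fintype.card ι * uniformProb p := by
        rw [Finset.expect_sum_comm, uniformProb_eq_expect]
        simp only [expect_apply_eval fun x ↦ if p x then (1 : ℝ) else 0, Finset.sum_const,
          Finset.card_univ, nsmul_eq_mul]

end Expectation

section CauchySchwarz

open scoped BigOperators

lemma dependsOn_comp_cons_succ {W β : Type*} {n : ℕ} {i : Fin n} {f : (Fin (n + 1) → W) → β}
    (hf : DependsOn f {i.succ}ᶜ) (x : W) : DependsOn (fun b ↦ f (Fin.cons x b)) {i}ᶜ := by
  refine fun b b' hb ↦ hf fun j hj ↦ ?_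
  cases j using Fin.cases with
  | zero => rfl
  | succ j => exact hb j (by simpa using hj)

lemma apply_cons_eq_of_dependsOn {W β : Type*} {n : ℕ} {f : (Fin (n + 1) → W) → β}
    (hf : DependsOn f {0}ᶜ) (x y : W) (b : Fin n → W) : f (Fin.cons x b) = f (Fin.cons y b) := by
  refine hf fun j hj ↦ ?_
  obtain ⟨j, rfl⟩ := Fin.exists_succ_eq.2 hj
  rfl

lemma norm_expect_mul_pow_two_pow_succ_le {W : Type*} [Fintype W] [Nonempty W] {n : ℕ}
    {c : (Fin (n + 1) → W) → ℂ} (hc : ∀ B, ‖c B‖ ≤ 1) (hdep : DependsOn c {0}ᶜ)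
    (g : (Fin (n + 1) → W) → ℂ) (m : ℕ) :
    ‖𝔼 B, c B * g B‖ ^ 2 ^ (m + 1) ≤
      𝔼 x, 𝔼 y, ‖𝔼 b, g (Fin.cons x b) * starRingEnd ℂ (g (Fin.cons y b))‖ ^ 2 ^ m := by
  obtain ⟨w⟩ := ‹Nonempty W›
  have hsplit : 𝔼 B, c B * g B = 𝔼 b, c (Fin.cons w b) * 𝔼 x, g (Fin.cons x b) := by
    rw [expect_fin_cons, Finset.expect_comm]
    simp only [apply_cons_eq_of_dependsOn hdep _ w, Finset.mul_expect]
  calc ‖𝔼 B, c B * g B‖ ^ 2 ^ (m + 1)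
      = (‖𝔼 b, c (Fin.cons w b) * 𝔼 x, g (Fin.cons x b)‖ ^ 2) ^ 2 ^ m := by
        rw [hsplit, pow_succ', pow_mul]
    _ ≤ (𝔼 x, 𝔼 y, ‖𝔼 b, g (Fin.cons x b) * starRingEnd ℂ (g (Fin.cons y b))‖) ^ 2 ^ m := by
        gcongr
        exact norm_expect_mul_sq_le (fun _ ↦ hc _) fun x b ↦ g (Fin.cons x b)
    _ ≤ 𝔼 x, (𝔼 y, ‖𝔼 b, g (Fin.cons x b) * starRingEnd ℂ (g (Fin.cons y b))‖) ^ 2 ^ m :=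
        pow_expect_le_expect_pow (fun _ ↦ Finset.expect_nonneg fun _ _ ↦ norm_nonneg _) _
    _ ≤ 𝔼 x, 𝔼 y, ‖𝔼 b, g (Fin.cons x b) * starRingEnd ℂ (g (Fin.cons y b))‖ ^ 2 ^ m :=
        Finset.expect_le_expect fun _ _ ↦ pow_expect_le_expect_pow (fun _ ↦ norm_nonneg _) _

end CauchySchwarz

section CharacterSums

open scoped BigOperators

lemma addChar_mul_mul_conj {R : Type*} [Ring R] [Finite R] (χ : AddChar R ℂ) (a x y p : R) :
    χ (a * (x * p)) * starRingEnd ℂ (χ (a * (y * p))) = χ (a * (x - y) * p) := by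
  rw [← AddChar.map_neg_eq_conj, ← AddChar.map_add_eq_mul]
  congr 1
  noncomm_ring

variable {R : Type*} [Ring R] [Fintype R]

lemma expect_addChar_mul_left_eq_zero {χ : AddChar R ℂ} {a b : R} (h : χ (a * b) ≠ 1) :
    𝔼 x, χ (a * x) = 0 := by
  have hne : χ.compAddMonoidHom (AddMonoidHom.mulLeft a) ≠ 0 := AddChar.ne_zero_iff.2 ⟨b, h⟩
  exact AddChar.expect_eq_zero_iff_ne_zero.2 hne

lemma norm_expect_addChar_mul_le {χ : AddChar R ℂ} (hχ : ∀ a ≠ 0, ∃ b, χ (a * b) ≠ 1) (a : R)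
    {c : ℂ} (hc : ‖c‖ ≤ 1) : ‖𝔼 x, χ (a * x) * c‖ ≤ uniformProb fun _ : Fin 0 → R ↦ a = 0 := by
  rw [← Finset.expect_mul]
  by_cases ha : a = 0
  · simpa [ha, uniformProb] using hc
  · obtain ⟨b, hb⟩ := hχ a ha
    simp [expect_addChar_mul_left_eq_zero hb, uniformProb_nonneg]

theorem norm_expect_addChar_prod_pow_le {χ : AddChar R ℂ}
    (hχ : ∀ a ≠ 0, ∃ b, χ (a * b) ≠ 1) {n : ℕ} (a : R)
    {C : Fin (n + 1) → (Fin (n + 1) → R) → ℂ} (hC : ∀ i B, ‖C i B‖ ≤ 1)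
    (hdep : ∀ i, DependsOn (C i) {i}ᶜ) :
    ‖𝔼 B, χ (a * (List.ofFn B).prod) * ∏ i, C i B‖ ^ 2 ^ n ≤
      uniformProb fun D : Fin n → R ↦ a * (List.ofFn D).prod = 0 := by
  induction n generalizing a with
  | zero =>
    have hC₀ (B : Fin 1 → R) : C 0 B = C 0 0 := hdep 0 (by simp)
    simpa [expect_fin_cons, hC₀] using norm_expect_addChar_mul_le hχ a (hC 0 0)
  | succ n ih =>
    let g (B : Fin (n + 2) → R) : ℂ :=
      χ (a * (List.ofFn B).prod) * ∏ i : Fin (n + 1), C i.succ B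
    have hdiff (x y : R) :
        ‖𝔼 b, g (Fin.cons x b) * starRingEnd ℂ (g (Fin.cons y b))‖ ^ 2 ^ n ≤
          uniformProb fun D : Fin n → R ↦ a * (x - y) * (List.ofFn D).prod = 0 := by
      have hg (b : Fin (n + 1) → R) : g (Fin.cons x b) * starRingEnd ℂ (g (Fin.cons y b)) =
          χ (a * (x - y) * (List.ofFn b).prod) * ∏ i : Fin (n + 1),
            C i.succ (Fin.cons x b) * starRingEnd ℂ (C i.succ (Fin.cons y b)) := by
        rw [← addChar_mul_mul_conj, Finset.prod_mul_distrib, ← map_prod]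
        simp only [g, List.ofFn_cons, List.prod_cons, map_mul]
        ring
      simp only [hg]
      refine ih _ (fun i b ↦ ?_) fun i b b' hb ↦ ?_
      · rw [norm_mul, RCLike.norm_conj]
        exact mul_le_one₀ (hC _ _) (norm_nonneg _) (hC _ _)
      · simp only [dependsOn_comp_cons_succ (hdep i.succ) x hb,
          dependsOn_comp_cons_succ (hdep i.succ) y hb]
    calc ‖𝔼 B, χ (a * (List.ofFn B).prod) * ∏ i, C i B‖ ^ 2 ^ (n + 1)
        = ‖𝔼 B, C 0 B * g B‖ ^ 2 ^ (n + 1) := by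
          simp only [g, Fin.prod_univ_succ (n := n + 1), mul_left_comm]
      _ ≤ 𝔼 x, 𝔼 y, ‖𝔼 b, g (Fin.cons x b) * starRingEnd ℂ (g (Fin.cons y b))‖ ^ 2 ^ n :=
          norm_expect_mul_pow_two_pow_succ_le (hC 0) (hdep 0) g n
      _ ≤ 𝔼 x, 𝔼 y, uniformProb fun D : Fin n → R ↦ a * (x - y) * (List.ofFn D).prod = 0 :=
          Finset.expect_le_expect fun x _ ↦ Finset.expect_le_expect fun y _ ↦ hdiff x y
      _ = 𝔼 _x : R, 𝔼 z, uniformProb fun D : Fin n → R ↦ a * z * (List.ofFn D).prod = 0 :=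
          Finset.expect_congr rfl fun x _ ↦
            Fintype.expect_equiv (Equiv.subLeft x) _ _ fun _ ↦ rfl
      _ = uniformProb fun D : Fin (n + 1) → R ↦ a * (List.ofFn D).prod = 0 := by
          simp [uniformProb_fin_cons, List.ofFn_succ, mul_assoc]

end CharacterSums

section Discrepancy

open scoped BigOperators

lemma ite_sub_one_div_card_eq_expect_addChar {G : Type*} [AddCommGroup G] [Fintype G]
    [DecidableEq G] (z : G) : (if z = 0 then (1 : ℂ) else 0) - 1 / Fintype.card G =
      𝔼 ψ : AddChar G ℂ, if ψ = 0 then 0 else ψ z := by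
  classical
  have h : 𝔼 ψ : AddChar G ℂ, (if ψ = 0 then (1 : ℂ) else 0) = 1 / Fintype.card G := by
    simp [AddChar.card_eq]
  rw [← AddChar.expect_apply_eq_ite, ← h, ← Finset.expect_sub_distrib]
  refine Finset.expect_congr rfl fun ψ _ ↦ ?_
  split_ifs with hψ <;> simp [hψ]

lemma discVal_eq_norm_expect {k : ℕ} {W Y : Type} [Fintype W] [Fintype Y] [DecidableEq Y]
    (T : (Fin k → W) → Y) (S : Set (Fin k → W)) (y : Y) :
    discVal k W Y T S y = ‖𝔼 B, ((if T B = y then (1 : ℂ) else 0) - 1 / Fintype.card Y) *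
      S.indicator 1 B‖ := by
  classical
  have hS : (Nat.card S : ℂ) = ∑ B, S.indicator (1 : (Fin k → W) → ℂ) B := by
    simp [Set.indicator_apply, Nat.card_eq_fintype_card, Fintype.card_subtype]
  have hT : (Nat.card ↥(T ⁻¹' {y} ∩ S) : ℂ) =
      ∑ B, (if T B = y then (1 : ℂ) else 0) * S.indicator 1 B := by
    simp [Set.indicator_apply, Nat.card_eq_fintype_card, Fintype.card_subtype, ← ite_and, and_comm]
  rw [Fintype.expect_eq_sum_div_card, norm_div, Complex.norm_natCast, discVal,
    Nat.card_eq_fintype_card (α := Fin k → W), Nat.card_eq_fintype_card (α := Y)]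
  congr 1
  rw [← Real.norm_eq_abs, ← Complex.norm_real]
  push_cast
  rw [hS, hT, Finset.sum_div, ← Finset.sum_sub_distrib]
  congr! 2 with B
  ring

theorem discVal_le_of_forall_addChar {k : ℕ} {W Y : Type} [Fintype W] [AddCommGroup Y] [Finite Y]
    {T : (Fin k → W) → Y} {S : Set (Fin k → W)} {β : ℝ} (hβ : 0 ≤ β)
    (h : ∀ ψ : AddChar Y ℂ, ψ ≠ 0 → ‖𝔼 B, ψ (T B) * S.indicator 1 B‖ ≤ β) (y : Y) :
    discVal k W Y T S y ≤ β := by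
  classical
  have := Fintype.ofFinite Y
  have hfourier : 𝔼 B, ((if T B = y then (1 : ℂ) else 0) - 1 / Fintype.card Y) *
      S.indicator 1 B =
      𝔼 ψ : AddChar Y ℂ, if ψ = 0 then 0 else ψ (-y) * 𝔼 B, ψ (T B) * S.indicator 1 B := by
    simp only [← sub_eq_zero (a := T _), ite_sub_one_div_card_eq_expect_addChar, Finset.expect_mul]
    rw [Finset.expect_comm]
    refine Finset.expect_congr rfl fun ψ _ ↦ ?_
    split_ifs with hψ
    · simp
    · simp only [Finset.mul_expect, sub_eq_neg_add, AddChar.map_add_eq_mul, mul_assoc]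
  rw [discVal_eq_norm_expect, hfourier]
  refine (RCLike.norm_expect_le (K := ℂ)).trans (Finset.expect_le Finset.univ_nonempty fun ψ _ ↦ ?_)
  split_ifs with hψ
  · simpa using hβ
  · simpa using h ψ hψ

lemma dependsOn_indicator_of_isCylinder {k : ℕ} {W : Type} {i : Fin k} {C : Set (Fin k → W)}
    (hC : IsCylinder k W i C) : DependsOn (C.indicator (1 : (Fin k → W) → ℂ)) {i}ᶜ := by
  classical
  intro x x' h
  simp only [Set.indicator_apply, hC x x' fun j hj ↦ h j hj, Pi.one_apply]

lemma multiDisc_le {k : ℕ} {W Y : Type} {T : (Fin k → W) → Y} {β : ℝ} (hβ : 0 ≤ β)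
    (h : ∀ S y, IsCylinderIntersection k W S → discVal k W Y T S y ≤ β) :
    multiDisc k W Y T ≤ β := by
  refine Real.sSup_le ?_ hβ
  rintro _ ⟨S, y, hS, rfl⟩
  exact h S y hS

lemma multiDisc_nonneg {k : ℕ} {W Y : Type} (T : (Fin k → W) → Y) : 0 ≤ multiDisc k W Y T := by
  refine Real.sSup_nonneg ?_
  rintro _ ⟨S, y, -, rfl⟩
  exact div_nonneg (abs_nonneg _) (Nat.cast_nonneg _)

theorem multiDisc_pow_le_uniformProb_prod_eq_zero {R Y : Type} [Ring R] [Fintype R]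
    [AddCommGroup Y] [Finite Y] {τ : R →+ Y} (hτ : ∀ a ≠ 0, Function.Surjective fun b ↦ τ (a * b))
    (n : ℕ) : multiDisc (n + 1) R Y (fun B ↦ τ (List.ofFn B).prod) ^ 2 ^ n ≤
      uniformProb fun D : Fin n → R ↦ (List.ofFn D).prod = 0 := by
  classical
  set p := uniformProb fun D : Fin n → R ↦ (List.ofFn D).prod = 0
  have hp : 0 ≤ p := uniformProb_nonneg _
  have hroot : (p ^ ((2 ^ n : ℕ) : ℝ)⁻¹) ^ 2 ^ n = p := Real.rpow_inv_natCast_pow hp (by positivity)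
  have hβ : 0 ≤ p ^ ((2 ^ n : ℕ) : ℝ)⁻¹ := Real.rpow_nonneg hp _
  have hdisc : multiDisc (n + 1) R Y (fun B ↦ τ (List.ofFn B).prod) ≤ p ^ ((2 ^ n : ℕ) : ℝ)⁻¹ := by
    refine multiDisc_le hβ fun S y ⟨C, hC, hS⟩ ↦
      discVal_le_of_forall_addChar hβ (fun ψ hψ ↦ ?_) y
    have hχ (a : R) (ha : a ≠ 0) : ∃ b, ψ.compAddMonoidHom τ (a * b) ≠ 1 := by
      obtain ⟨z, hz⟩ := AddChar.ne_zero_iff.1 hψ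
      obtain ⟨b, rfl⟩ := hτ a ha z
      exact ⟨b, hz⟩
    have hprod (B : Fin (n + 1) → R) :
        S.indicator (1 : (Fin (n + 1) → R) → ℂ) B = ∏ i, (C i).indicator 1 B := by
      simp [hS, Set.indicator_apply, Finset.prod_ite_zero]
    have hbns := norm_expect_addChar_prod_pow_le hχ 1 (C := fun i ↦ (C i).indicator 1)
      (fun i B ↦ (norm_indicator_le_norm_self _ _).trans (by simp))
      fun i ↦ dependsOn_indicator_of_isCylinder (hC i)
    simp only [one_mul, AddChar.compAddMonoidHom_apply, ← hprod] at hbns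
    exact le_of_pow_le_pow_left₀ (pow_ne_zero n two_ne_zero) hβ (hbns.trans_eq hroot.symm)
  exact (pow_le_pow_left₀ (multiDisc_nonneg _) hdisc _).trans_eq hroot

lemma discVal_le_one_sub_inv {k : ℕ} {W Y : Type} [Finite W] [Finite Y] [Nontrivial Y]
    (T : (Fin k → W) → Y) (S : Set (Fin k → W)) (y : Y) :
    discVal k W Y T S y ≤ 1 - 1 / Nat.card Y := by
  have hY : (2 : ℝ) ≤ Nat.card Y := by exact_mod_cast Finite.one_lt_card (α := Y)
  have hinv : 1 / (Nat.card Y : ℝ) ≤ 1 / 2 := by gcongr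
  have hST : (Nat.card ↥(T ⁻¹' {y} ∩ S) : ℝ) ≤ Nat.card S := by
    exact_mod_cast Nat.card_mono (Set.toFinite S) Set.inter_subset_right
  have hS : (Nat.card S : ℝ) ≤ Nat.card (Fin k → W) := by
    exact_mod_cast Finite.card_subtype_le S
  have hST₀ : (0 : ℝ) ≤ Nat.card ↥(T ⁻¹' {y} ∩ S) := Nat.cast_nonneg _
  refine div_le_of_le_mul₀ (Nat.cast_nonneg _) (by linarith) ?_
  rw [div_eq_mul_one_div, abs_le]
  constructor <;> nlinarith [hinv, hST, hS, hST₀]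

lemma multiDisc_le_one_sub_inv {k : ℕ} {W Y : Type} [Finite W] [Finite Y] [Nontrivial Y]
    (T : (Fin k → W) → Y) : multiDisc k W Y T ≤ 1 - 1 / Nat.card Y := by
  have hY : (1 : ℝ) ≤ Nat.card Y := by exact_mod_cast Nat.card_pos (α := Y)
  exact multiDisc_le (sub_nonneg.2 <| div_le_one_of_le₀ hY <| by positivity)
    fun S y _ ↦ discVal_le_one_sub_inv T S y

lemma isCylinderIntersection_singleton {k : ℕ} (hk : 2 ≤ k) {W : Type} (x : Fin k → W) :
    IsCylinderIntersection k W {x} := by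
  have : Nontrivial (Fin k) := Fin.nontrivial_iff_two_le.2 hk
  refine ⟨fun i ↦ {z | ∀ j, j ≠ i → z j = x j}, fun i z z' h ↦ ?_, ?_⟩
  · exact forall₂_congr fun j hj ↦ by rw [h j hj]
  · ext z
    simp only [Set.mem_singleton_iff, Set.mem_iInter, Set.mem_ofPred_eq]
    refine ⟨fun h _ _ _ ↦ congrFun h _, fun h ↦ funext fun j ↦ ?_⟩
    obtain ⟨i, hi⟩ := exists_ne j
    exact h i j hi.symm

lemma discVal_singleton_pos {k : ℕ} {W Y : Type} [Finite W] [Finite Y] [Nontrivial Y]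
    (T : (Fin k → W) → Y) (x : Fin k → W) : 0 < discVal k W Y T {x} (T x) := by
  have : Nonempty (Fin k → W) := ⟨x⟩
  have hY : (1 : ℝ) < Nat.card Y := by exact_mod_cast Finite.one_lt_card (α := Y)
  have hfibre : T ⁻¹' {T x} ∩ {x} = {x} := Set.inter_eq_right.2 (by simp)
  rw [discVal, hfibre, Nat.card_unique, Nat.cast_one]
  have hgap : (0 : ℝ) < 1 - 1 / Nat.card Y := sub_pos.2 ((div_lt_one (by linarith)).2 hY)
  exact div_pos (abs_pos.2 hgap.ne') (by exact_mod_cast Nat.card_pos)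

lemma multiDisc_pos {k : ℕ} (hk : 2 ≤ k) {W Y : Type} [Finite W] [Nonempty W] [Finite Y]
    [Nontrivial Y] (T : (Fin k → W) → Y) : 0 < multiDisc k W Y T := by
  obtain ⟨w⟩ := ‹Nonempty W›
  refine (discVal_singleton_pos T fun _ ↦ w).trans_le (le_csSup ⟨1 - 1 / Nat.card Y, ?_⟩
    ⟨_, _, isCylinderIntersection_singleton hk _, rfl⟩)
  rintro _ ⟨S, y, -, rfl⟩
  exact discVal_le_one_sub_inv T S y

end Discrepancy

section Nullity

lemma finrank_ker_comp_le {K V V' V'' : Type*} [DivisionRing K] [AddCommGroup V] [Module K V]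
    [AddCommGroup V'] [Module K V'] [AddCommGroup V''] [Module K V''] [FiniteDimensional K V]
    [FiniteDimensional K V'] (f : V →ₗ[K] V') (g : V' →ₗ[K] V'') :
    Module.finrank K (LinearMap.ker (g ∘ₗ f)) ≤
      Module.finrank K (LinearMap.ker f) + Module.finrank K (LinearMap.ker g) := by
  let φ := f.domRestrict (LinearMap.ker (g ∘ₗ f))
  have hker : Module.finrank K (LinearMap.ker φ) = Module.finrank K (LinearMap.ker f) := by
    rw [LinearMap.ker_domRestrict]
    exact (Submodule.comapSubtypeEquivOfLe (LinearMap.ker_le_ker_comp f g)).finrank_eq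
  have hrange : LinearMap.range φ ≤ LinearMap.ker g := by
    rintro _ ⟨x, rfl⟩
    exact x.2
  rw [← φ.finrank_range_add_finrank_ker, hker, add_comm]
  exact Nat.add_le_add_left (Submodule.finrank_mono hrange) _

/-- The nullity of a matrix: the dimension of its kernel, acting on column vectors. -/
noncomputable def nullity {F m n : Type*} [Field F] [Fintype n] (A : Matrix m n F) : ℕ :=
  Module.finrank F (LinearMap.ker A.mulVecLin)

variable {F n : Type*} [Field F] [Fintype n]

lemma nullity_zero {m : Type*} : nullity (0 : Matrix m n F) = Fintype.card n := by
  rw [nullity, Matrix.mulVecLin_zero, LinearMap.ker_zero, finrank_top,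
    Module.finrank_fintype_fun_eq_card]

lemma nullity_one [DecidableEq n] : nullity (1 : Matrix n n F) = 0 := by
  rw [nullity, Matrix.mulVecLin_one, LinearMap.ker_id, finrank_bot]

lemma nullity_mul_le {l m : Type*} [Fintype m] (A : Matrix l m F) (B : Matrix m n F) :
    nullity (A * B) ≤ nullity A + nullity B := by
  rw [nullity, Matrix.mulVecLin_mul, add_comm]
  exact finrank_ker_comp_le _ _

lemma nullity_list_prod_le [DecidableEq n] (L : List (Matrix n n F)) :
    nullity L.prod ≤ (L.map nullity).sum := by
  induction L with
  | nil => simp [nullity_one]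
  | cons A L ih =>
    rw [List.prod_cons, List.map_cons, List.sum_cons]
    exact (nullity_mul_le A L.prod).trans (Nat.add_le_add_left ih _)

lemma exists_le_nullity_of_prod_eq_zero [DecidableEq n] {k r : ℕ} (hr : k * r < Fintype.card n + k)
    {D : Fin k → Matrix n n F} (hD : (List.ofFn D).prod = 0) : ∃ i, r ≤ nullity (D i) := by
  by_contra! hlt
  have hsum : Fintype.card n ≤ ∑ i, nullity (D i) := by
    have h := nullity_list_prod_le (List.ofFn D)
    rwa [hD, nullity_zero, List.map_ofFn, List.sum_ofFn] at h
  have hle : ∑ i, (nullity (D i) + 1) ≤ k * r := by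
    simpa using Finset.sum_le_card_nsmul Finset.univ _ r fun i _ ↦ hlt i
  rw [Finset.sum_add_distrib] at hle
  simp only [Finset.sum_const, Finset.card_univ, Fintype.card_fin, smul_eq_mul, mul_one] at hle
  omega

end Nullity

section RandomMatrix

open scoped BigOperators MatrixGroups

variable {F m n : Type*} [Field F]

lemma exists_matrix_mulVec_eq [Fintype n] {ι : Type*} {s : ι → n → F}
    (hs : LinearIndependent F s) (t : ι → m → F) :
    ∃ D : Matrix m n F, ∀ i, D.mulVec (s i) = t i := by
  classical
  obtain ⟨g, hg⟩ := LinearMap.exists_extend ((Module.Basis.span hs).constr F t)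
  refine ⟨LinearMap.toMatrix' g, fun i ↦ ?_⟩
  rw [LinearMap.toMatrix'_mulVec, ← (Module.Basis.span hs).constr_basis F t i, ← hg,
    LinearMap.comp_apply, Submodule.subtype_apply, Module.Basis.span_apply]

lemma card_GL_le_card_linearIndependent_ker [Finite F] [Fintype n] {r : ℕ} {D : Matrix m n F}
    (hD : r ≤ nullity D) : Nat.card (GL (Fin r) F) ≤
      Nat.card {s : Fin r → n → F // LinearIndependent F s ∧ ∀ i, D.mulVec (s i) = 0} := by
  have := Fintype.ofFinite F
  let N := LinearMap.ker D.mulVecLin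
  let φ (s : {s : Fin r → N // LinearIndependent F s}) :
      {s : Fin r → n → F // LinearIndependent F s ∧ ∀ i, D.mulVec (s i) = 0} :=
    ⟨fun i ↦ s.1 i, s.2.map' N.subtype N.ker_subtype, fun i ↦ (s.1 i).2⟩
  have hφ : Function.Injective φ := fun s t hst ↦
    Subtype.ext <| funext fun i ↦ Subtype.ext <| congrFun (congrArg Subtype.val hst) i
  calc Nat.card (GL (Fin r) F)
      = ∏ i : Fin r, (Fintype.card F ^ r - Fintype.card F ^ (i : ℕ)) := Matrix.card_GL_field r
    _ ≤ ∏ i : Fin r, (Fintype.card F ^ nullity D - Fintype.card F ^ (i : ℕ)) := by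
        gcongr
        exact Fintype.card_pos
    _ = Nat.card {s : Fin r → N // LinearIndependent F s} := (card_linearIndependent hD).symm
    _ ≤ Nat.card {s : Fin r → n → F // LinearIndependent F s ∧ ∀ i, D.mulVec (s i) = 0} :=
        Nat.card_le_card_of_injective φ hφ

variable [Fintype F] [Fintype m] [DecidableEq m] [Fintype n] [DecidableEq n]

lemma uniformProb_forall_mulVec_eq_zero {ι : Type*} [Fintype ι] {s : ι → n → F}
    (hs : LinearIndependent F s) : uniformProb (fun D : Matrix m n F ↦ ∀ i, D.mulVec (s i) = 0) =
      1 / (Fintype.card F : ℝ) ^ (Fintype.card m * Fintype.card ι) := by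
  let f : Matrix m n F →+ (ι → m → F) := AddMonoidHom.mk' (fun D i ↦ D.mulVec (s i))
    fun A B ↦ funext fun i ↦ Matrix.add_mulVec A B (s i)
  have hf : Function.Surjective f := fun t ↦
    (exists_matrix_mulVec_eq hs t).imp fun D hD ↦ funext hD
  have h := uniformProb_apply_eq_zero hf
  simp only [funext_iff (f := f _)] at h
  simpa [f, pow_mul, Nat.card_fun] using h

lemma pow_sq_le_two_mul_card_GL_sq (r : ℕ) :
    Fintype.card F ^ r ^ 2 ≤ 2 * Nat.card (GL (Fin r) F) ^ 2 := by
  set q := Fintype.card F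
  have hq : 2 ≤ q := Fintype.one_lt_card
  have hfactor (i : Fin r) : q ^ r ≤ 2 * (q ^ r - q ^ (i : ℕ)) := by
    have h : 2 * q ^ (i : ℕ) ≤ q ^ r := by
      calc 2 * q ^ (i : ℕ) ≤ q ^ ((i : ℕ) + 1) := by rw [pow_succ']; gcongr
        _ ≤ q ^ r := by gcongr; exacts [by omega, i.2]
    omega
  have hGL : q ^ r ^ 2 ≤ 2 ^ r * Nat.card (GL (Fin r) F) := by
    calc q ^ r ^ 2 = ∏ _i : Fin r, q ^ r := by simp [sq, pow_mul]
      _ ≤ ∏ i : Fin r, 2 * (q ^ r - q ^ (i : ℕ)) := by gcongr; exact hfactor _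
      _ = 2 ^ r * Nat.card (GL (Fin r) F) := by
        rw [Finset.prod_mul_distrib, ← Matrix.card_GL_field r]; simp
  refine le_of_mul_le_mul_left (a := 2 ^ r ^ 2) ?_ (by positivity)
  calc 2 ^ r ^ 2 * q ^ r ^ 2 ≤ q ^ r ^ 2 * q ^ r ^ 2 := by gcongr
    _ ≤ (2 ^ r * Nat.card (GL (Fin r) F)) * (2 ^ r * Nat.card (GL (Fin r) F)) := by gcongr
    _ = 2 ^ (2 * r) * Nat.card (GL (Fin r) F) ^ 2 := by ring
    _ ≤ 2 ^ (r ^ 2 + 1) * Nat.card (GL (Fin r) F) ^ 2 := by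
        gcongr
        · norm_num
        · nlinarith [sq_nonneg ((r : ℤ) - 1)]
    _ = 2 ^ r ^ 2 * (2 * Nat.card (GL (Fin r) F) ^ 2) := by ring

-- Double counting of pairs `(D, s)` with `s` an independent `r`-tuple in the kernel of `D`.
lemma uniformProb_le_nullity_mul_card_GL_le_one (r : ℕ) :
    uniformProb (fun D : Matrix n n F ↦ r ≤ nullity D) * Nat.card (GL (Fin r) F) ≤ 1 := by
  classical
  have hframes (D : Matrix n n F) :
      (if r ≤ nullity D then 1 else 0) * (Nat.card (GL (Fin r) F) : ℝ) ≤
        ∑ s : Fin r → n → F with LinearIndependent F s,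
          if ∀ i, D.mulVec (s i) = 0 then 1 else 0 := by
    split_ifs with hD
    · have h := card_GL_le_card_linearIndependent_ker hD
      rw [Nat.card_eq_fintype_card (α := Subtype _), Fintype.card_subtype,
        ← Finset.filter_filter] at h
      rw [one_mul, ← Finset.natCast_card_filter]
      exact_mod_cast h
    · rw [zero_mul]
      positivity
  calc uniformProb (fun D : Matrix n n F ↦ r ≤ nullity D) * Nat.card (GL (Fin r) F)
      ≤ 𝔼 D : Matrix n n F, ∑ s : Fin r → n → F with LinearIndependent F s,
          if ∀ i, D.mulVec (s i) = 0 then (1 : ℝ) else 0 := by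
        rw [uniformProb_eq_expect, Finset.expect_mul]
        exact Finset.expect_le_expect fun D _ ↦ hframes D
    _ = ∑ s : Fin r → n → F with LinearIndependent F s,
          uniformProb fun D : Matrix n n F ↦ ∀ i, D.mulVec (s i) = 0 := by
        simp only [Finset.expect_sum_comm, uniformProb_eq_expect]
    _ ≤ ∑ s : Fin r → n → F, 1 / (Fintype.card F : ℝ) ^ (Fintype.card n * r) := by
        rw [Finset.sum_congr rfl fun s hs ↦
          uniformProb_forall_mulVec_eq_zero (Finset.mem_filter.1 hs).2, Fintype.card_fin]
        exact Finset.sum_le_univ_sum_of_nonneg fun _ ↦ by positivity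
    _ = 1 := by simp [pow_mul]

lemma uniformProb_le_nullity_sq_mul_pow_le (r : ℕ) :
    uniformProb (fun D : Matrix n n F ↦ r ≤ nullity D) ^ 2 * (Fintype.card F : ℝ) ^ r ^ 2 ≤ 2 := by
  set p := uniformProb fun D : Matrix n n F ↦ r ≤ nullity D
  have hp : 0 ≤ p := uniformProb_nonneg _
  calc p ^ 2 * (Fintype.card F : ℝ) ^ r ^ 2 ≤ p ^ 2 * (2 * Nat.card (GL (Fin r) F) ^ 2) := by
        gcongr
        exact_mod_cast pow_sq_le_two_mul_card_GL_sq r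
    _ = 2 * (p * Nat.card (GL (Fin r) F)) ^ 2 := by ring
    _ ≤ 2 * 1 ^ 2 := by
        gcongr
        exact uniformProb_le_nullity_mul_card_GL_le_one r
    _ = 2 := by norm_num

end RandomMatrix

section TraceFunction

variable {F : Type} [Field F] {n : Type*} [Fintype n]

lemma surjective_trace_mul_left {A : Matrix n n F} (hA : A ≠ 0) :
    Function.Surjective fun B ↦ Matrix.trace (A * B) := by
  classical
  obtain ⟨i, j, hij⟩ : ∃ i j, A i j ≠ 0 := by
    contrapose! hA
    exact Matrix.ext hA
  refine fun t ↦ ⟨Matrix.single j i ((A i j)⁻¹ * t), ?_⟩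
  simp [Matrix.trace_mul_single, hij]

theorem multiDisc_trace_pow_le [Fintype F] {d k r : ℕ} (hr : k * r < d + k) :
    (multiDisc (k + 1) (Matrix (Fin d) (Fin d) F) F (fun B ↦ Matrix.trace (List.ofFn B).prod) ^
      2 ^ k) ^ 2 * (Fintype.card F : ℝ) ^ r ^ 2 ≤ 2 * k ^ 2 := by
  set X := multiDisc (k + 1) (Matrix (Fin d) (Fin d) F) F fun B ↦ Matrix.trace (List.ofFn B).prod
  set p := uniformProb fun D : Matrix (Fin d) (Fin d) F ↦ r ≤ nullity D
  have hX : X ^ 2 ^ k ≤ k * p := by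
    calc X ^ 2 ^ k
        ≤ uniformProb fun D : Fin k → Matrix (Fin d) (Fin d) F ↦ (List.ofFn D).prod = 0 :=
          multiDisc_pow_le_uniformProb_prod_eq_zero (τ := Matrix.traceAddMonoidHom (Fin d) F)
            (fun _ ↦ surjective_trace_mul_left) k
      _ ≤ k * p := by
          simpa using uniformProb_le_card_mul fun D : Fin k → Matrix (Fin d) (Fin d) F ↦
            exists_le_nullity_of_prod_eq_zero (by simpa using hr)
  calc (X ^ 2 ^ k) ^ 2 * (Fintype.card F : ℝ) ^ r ^ 2
      ≤ (k * p) ^ 2 * (Fintype.card F : ℝ) ^ r ^ 2 := by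
        gcongr
        exact pow_nonneg (multiDisc_nonneg _) _
    _ = k ^ 2 * (p ^ 2 * (Fintype.card F : ℝ) ^ r ^ 2) := by ring
    _ ≤ k ^ 2 * 2 := by
        gcongr
        exact uniformProb_le_nullity_sq_mul_pow_le r
    _ = 2 * k ^ 2 := mul_comm _ _

end TraceFunction

section Estimates

lemma natCast_pow_five_le (n : ℕ) : (n : ℝ) ^ 5 ≤ 3840 * 2 ^ n := by
  have hlog : (1 / 2 : ℝ) ≤ Real.log 2 := by linarith [Real.log_two_gt_d9]
  have hexp : (n * Real.log 2) ^ 5 / (5).factorial ≤ 2 ^ n := by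
    simpa [Real.exp_nat_mul, Real.exp_log] using
      Real.pow_div_factorial_le_exp (n * Real.log 2) (by positivity) 5
  have hhalf : (n * (1 / 2) : ℝ) ^ 5 ≤ (n * Real.log 2) ^ 5 := by gcongr
  norm_num [Nat.factorial, mul_pow] at hexp hhalf
  linarith

lemma log_two_mul_natCast_sq_le {n : ℕ} (hn : 0 < n) : Real.log (2 * n ^ 2) ≤ 2 * n := by
  have hn' : (0 : ℝ) < n := by exact_mod_cast hn
  rw [Real.log_mul two_ne_zero (by positivity), Real.log_pow]
  push_cast
  linarith [Real.log_le_sub_one_of_pos hn', Real.log_two_lt_d9]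

lemma natCast_mul_log_le_of_le_two_mul_log {q m n : ℕ} {y : ℝ} (hq : 0 < q) (hn : 0 < n)
    (hy : 1 / q ≤ y) (h : m * Real.log q ≤ 2 * Real.log (2 * n ^ 2)) :
    m * Real.log q ≤ 30720 * 2 ^ (n + 1) * y := by
  have hq' : (0 : ℝ) < q := by exact_mod_cast hq
  have hy₀ : 0 < y := hy.trans_lt' (by positivity)
  obtain rfl | hm := m.eq_zero_or_pos
  · rw [Nat.cast_zero, zero_mul]
    positivity
  have hlogq : Real.log q ≤ Real.log (4 * n ^ 4) := by
    calc Real.log q ≤ m * Real.log q :=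
          le_mul_of_one_le_left (Real.log_natCast_nonneg q) (by exact_mod_cast hm)
      _ ≤ 2 * Real.log (2 * n ^ 2) := h
      _ = Real.log (4 * n ^ 4) := by
        rw [← Nat.cast_two, ← Real.log_pow]
        congr 1
        push_cast
        ring
  have hqn : (q : ℝ) ≤ 4 * n ^ 4 := (Real.log_le_log_iff hq' (by positivity)).1 hlogq
  have hyn : 1 ≤ 4 * n ^ 4 * y := by
    rw [div_le_iff₀' hq'] at hy
    exact hy.trans (by gcongr)
  calc m * Real.log q ≤ 4 * n * 1 := by linarith [log_two_mul_natCast_sq_le hn]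
    _ ≤ 4 * n * (4 * n ^ 4 * y) := by gcongr
    _ = 16 * (n ^ 5 : ℝ) * y := by ring
    _ ≤ 16 * (3840 * 2 ^ n) * y := by
        gcongr
        exact natCast_pow_five_le n
    _ = 30720 * 2 ^ (n + 1) * y := by ring

lemma natCast_mul_log_le {q m n : ℕ} {X : ℝ} (hq : 0 < q) (hX₀ : 0 < X) (hX : X ≤ 1 - 1 / q)
    (h : (X ^ 2 ^ n) ^ 2 * q ^ m ≤ 2 * n ^ 2) :
    m * Real.log q ≤ 30720 * 2 ^ (n + 1) * -Real.log X := by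
  have hpos : 0 < (X ^ 2 ^ n) ^ 2 * (q : ℝ) ^ m := by positivity
  have hn : 0 < n := by
    refine Nat.pos_of_ne_zero fun hn ↦ (hpos.trans_le h).ne' ?_
    simp [hn]
  have hy : 1 / (q : ℝ) ≤ -Real.log X := by linarith [Real.log_le_sub_one_of_pos hX₀]
  have hsum : m * Real.log q ≤ 2 ^ (n + 1) * -Real.log X + Real.log (2 * n ^ 2) := by
    have hlog := Real.log_le_log hpos h
    rw [Real.log_mul (by positivity) (by positivity), Real.log_pow, Real.log_pow, Real.log_pow]
      at hlog
    push_cast at hlog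
    rw [pow_succ']
    linarith
  obtain hlarge | hsmall := le_or_gt (Real.log (2 * n ^ 2)) (2 ^ (n + 1) * -Real.log X)
  · have hy₀ : 0 < 2 ^ (n + 1) * -Real.log X :=
      mul_pos (by positivity) (hy.trans_lt' (by positivity))
    linarith
  · exact natCast_mul_log_le_of_le_two_mul_log hq hn hy (by linarith)

lemma exists_le_mul_lt_add (d : ℕ) {n : ℕ} (hn : 0 < n) : ∃ r, d ≤ n * r ∧ n * r < d + n := by
  have hlt := Nat.lt_mul_div_succ (d + n - 1) hn
  have hle := Nat.mul_div_le (d + n - 1) n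
  rw [mul_add] at hlt
  exact ⟨(d + n - 1) / n, by omega, by omega⟩

end Estimates

/-- There is a constant `c₀ > 0` such that for every finite field
`F` (i.e. every prime power `q = |F|`) and all integers `d ≥ 1`, `k ≥ 2`, the
multicolor discrepancy of the trace function
`T(B₁, …, B_k) = Tr(B₁ ⬝ B₂ ⬝ ⋯ ⬝ B_k)` on `d × d` matrices over `F` satisfies
`-log₂ disc_k(T) ≥ c₀ · d² · log₂ q / (k² · 2^k)`. -/
theorem trace_function_discrepancy :
    ∃ c₀ : ℝ, 0 < c₀ ∧
      ∀ (F : Type) [Field F] [Fintype F] (d k : ℕ), 1 ≤ d → 2 ≤ k →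
        -Real.logb 2 (multiDisc k (Matrix (Fin d) (Fin d) F) F
            (fun B => Matrix.trace (List.ofFn B).prod)) ≥
          c₀ * (d : ℝ) ^ 2 * Real.logb 2 (Fintype.card F) /
            ((k : ℝ) ^ 2 * 2 ^ k) := by
  refine ⟨1 / 30720, by norm_num, fun F _ _ d k _ hk ↦ ?_⟩
  obtain ⟨n, rfl⟩ : ∃ n, k = n + 1 := ⟨k - 1, by omega⟩
  obtain ⟨r, hdr, hrd⟩ := exists_le_mul_lt_add d (n := n) (by omega)
  set X := multiDisc (n + 1) (Matrix (Fin d) (Fin d) F) F fun B ↦ Matrix.trace (List.ofFn B).prod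
  set q := Fintype.card F
  have hX : X ≤ 1 - 1 / q :=
    (multiDisc_le_one_sub_inv _).trans_eq (by rw [Nat.card_eq_fintype_card])
  have hlog : (r ^ 2 : ℕ) * Real.log q ≤ 30720 * 2 ^ (n + 1) * -Real.log X :=
    natCast_mul_log_le Fintype.card_pos (multiDisc_pos hk _) hX (multiDisc_trace_pow_le hrd)
  have hd : (d : ℝ) ≤ (n + 1 : ℕ) * r := by exact_mod_cast hdr.trans (by gcongr; omega)
  calc 1 / 30720 * (d : ℝ) ^ 2 * Real.logb 2 q / ((n + 1 : ℕ) ^ 2 * 2 ^ (n + 1))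
      ≤ 1 / 30720 * ((n + 1 : ℕ) * r) ^ 2 * Real.logb 2 q / ((n + 1 : ℕ) ^ 2 * 2 ^ (n + 1)) := by
        have : 0 ≤ Real.logb 2 q := div_nonneg (Real.log_natCast_nonneg q) (by positivity)
        gcongr
    _ = (r ^ 2 : ℕ) * Real.log q / (30720 * 2 ^ (n + 1) * Real.log 2) := by
        rw [Real.logb]
        push_cast
        field_simp
    _ ≤ 30720 * 2 ^ (n + 1) * -Real.log X / (30720 * 2 ^ (n + 1) * Real.log 2) := by gcongr
    _ = -Real.logb 2 X := by
        rw [mul_div_mul_left _ _ (by positivity), Real.logb, neg_div]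
end

section
/- Let k ≥ 2, and let f : [n]^{k−1} × [N] → {0,1} be a graph function with base function A = Base(f). Then for every natural number b, N^1_k(f) ≥ min { N^h_{k−1,b}(A) − log₂ N − k + 1 , b }. -/
/-!
Fix an optimal nondeterministic protocol for `f`. As help for `x`, announce a proof `p` accepting
the 1-input `(x, A x)`, together with the transcript it produces. The inputs accepted with a given
proof and transcript form a cylinder intersection, and the last player, who does not see `y`,
cannot distinguish `(x, y)` from `(x, A x)`. Hence, once the help is known, `y = A x` holds if and
only if each of the other `k - 1` players finds `(x, y)` in their cylinder, so a prover can
announce `y` and let each of them confirm it with one bit.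

The last bit of the transcript is left out of the help: its speaker confirms acceptance instead.
The bit saved this way pays for rounding `log₂ N` up to an integer.
-/

theorem length_buildTranscript (step : List Bool → Bool) (m : ℕ) :
    (buildTranscript step m).length = m := by
  induction m with
  | zero => rfl
  | succ m ih => simp [buildTranscript, ih]

theorem buildTranscript_eq_iff (step : List Bool → Bool) {m : ℕ} {τ : List Bool}
    (hτ : τ.length = m) :
    buildTranscript step m = τ ↔ ∀ i (hi : i < τ.length), step (τ.take i) = τ[i] := by
  subst hτ
  induction τ using List.reverseRecOn with
  | nil => simp [buildTranscript]
  | append_singleton σ w ih =>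
    have hsnoc : buildTranscript step (σ ++ [w]).length = σ ++ [w] ↔
        buildTranscript step σ.length = σ ∧ step σ = w := by
      rw [List.length_append, List.length_singleton, buildTranscript]
      constructor
      · intro h
        obtain ⟨hσ, hw⟩ := List.append_inj' h rfl
        exact ⟨hσ, by simpa [hσ] using hw⟩
      · rintro ⟨hσ, hw⟩
        rw [hσ, hw]
    have hprefix (i : ℕ) (hi : i < σ.length) (hi' : i < (σ ++ [w]).length) :
        step ((σ ++ [w]).take i) = (σ ++ [w])[i] ↔ step (σ.take i) = σ[i] := by
      rw [List.take_append_of_le_length hi.le, List.getElem_append_left hi]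
    rw [hsnoc, ih]
    constructor
    · rintro ⟨hσ, hw⟩ i hi
      obtain hlt | rfl : i < σ.length ∨ i = σ.length :=
        Nat.lt_succ_iff_lt_or_eq.1 (by simpa using hi)
      · exact (hprefix i hlt hi).2 (hσ i hlt)
      · simpa using hw
    · intro h
      have hlen : σ.length < (σ ++ [w]).length := by simp
      exact ⟨fun i hi => (hprefix i hi (hi.trans hlen)).1 (h i (hi.trans hlen)),
        by simpa using h σ.length hlen⟩

theorem buildTranscript_eq_replicate_true_iff (step : ℕ → Bool) (m : ℕ) :
    buildTranscript (fun t => step t.length) m = List.replicate m true ↔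
      ∀ i < m, step i = true := by
  rw [buildTranscript_eq_iff _ List.length_replicate]
  simp +contextual [le_of_lt]

/-- `C` is a cylinder for a player who cannot distinguish `R`-related inputs: that player can
decide membership in `C`. For `R = nofVis k W i` this is `IsCylinder k W i C`. -/
def IsVisCylinder {I : Type} (R : I → I → Prop) (C : Set I) : Prop :=
  ∀ x x', R x x' → (x ∈ C ↔ x' ∈ C)

namespace NProt

variable {k a d : ℕ} {I Y Z T : Type} {Vis : Fin k → I → I → Prop}

/-- Postcomposition of the output of a protocol with `g`. -/
def map {c : ℕ} (g : Y → Z) (P : NProt k I Vis Y a c) : NProt k I Vis Z a c where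
  speaker := P.speaker
  msg := P.msg
  msg_nof := P.msg_nof
  out p t := g (P.out p t)

open Classical in
/-- The voting protocol: the proof string encodes a claim `y : T` through the decoder `dec`, each
player `i` in turn announces whether the input lies in `C y i`, and `y` is output if the vote is
unanimous. Proof strings that encode no claim are voted down. -/
noncomputable def vote [NeZero k] (dec : (Fin a → Bool) → Option T) (C : T → Fin k → Set I)
    (hC : ∀ y i, IsVisCylinder (Vis i) (C y i)) : NProt k I Vis (Option T) a k where
  speaker _ t := Fin.ofNat k t.length
  msg p t x := decide (∃ y, dec p = some y ∧ x ∈ C y (Fin.ofNat k t.length))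
  msg_nof p t x x' h := by simp only [hC _ _ x x' h]
  out p t := if t = List.replicate k true then dec p else none

theorem run_vote_eq_some_iff [NeZero k] (dec : (Fin a → Bool) → Option T)
    (C : T → Fin k → Set I) (hC : ∀ y i, IsVisCylinder (Vis i) (C y i)) (p : Fin a → Bool)
    (x : I) (y : T) :
    (vote dec C hC).run p x = some y ↔ dec p = some y ∧ ∀ i, x ∈ C y i := by
  classical
  have hunanimous : dec p = some y →
      (buildTranscript (fun t => (vote dec C hC).msg p t x) k = List.replicate k true ↔
        ∀ i, x ∈ C y i) := by
    intro hy
    refine (buildTranscript_eq_replicate_true_iff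
      (fun i => decide (∃ y, dec p = some y ∧ x ∈ C y (Fin.ofNat k i))) k).trans ?_
    simp only [hy, Option.some.injEq, exists_eq_left', decide_eq_true_eq]
    exact ⟨fun h i => by simpa using h i i.isLt, fun h i _ => h _⟩
  calc (vote dec C hC).run p x = some y
      ↔ buildTranscript (fun t => (vote dec C hC).msg p t x) k = List.replicate k true ∧
          dec p = some y := by
        rw [← Option.ite_none_right_eq_some]; rfl
    _ ↔ dec p = some y ∧ ∀ i, x ∈ C y i := by
        rw [and_comm, and_congr_right hunanimous]

theorem exists_forall_exists_run_eq_some_iff [NeZero k] [Fintype T] (C : T → Fin k → Set I)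
    (hC : ∀ y i, IsVisCylinder (Vis i) (C y i)) :
    ∃ P : NProt k I Vis (Option T) (Nat.clog 2 (Fintype.card T)) k,
      ∀ x y, (∃ p, P.run p x = some y) ↔ ∀ i, x ∈ C y i := by
  obtain ⟨enc⟩ : Nonempty (T ↪ (Fin (Nat.clog 2 (Fintype.card T)) → Bool)) :=
    Function.Embedding.nonempty_of_card_le <| by
      simpa using Nat.le_pow_clog one_lt_two (Fintype.card T)
  refine ⟨vote (Function.partialInv enc) C hC, fun x y => ?_⟩
  simp only [run_vote_eq_some_iff, exists_and_right, and_iff_right_iff_imp]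
  exact fun _ => ⟨enc y, Function.partialInv_left enc.injective y⟩

/-- The part of player `i` in the acceptance of an input by a Boolean protocol with proof `s.1`
and transcript `s.2` up to the last bit: player `i` sends the bits of `s.2` where it is their turn,
and completes `s.2` to an accepting transcript if they speak last. -/
def acceptCylinder (P : NProt k I Vis Bool a (d + 1))
    (s : (Fin a → Bool) × List.Vector Bool d) (i : Fin k) : Set I :=
  {x | (∀ j (hj : j < s.2.1.length), P.speaker s.1 (s.2.1.take j) = i →
      P.msg s.1 (s.2.1.take j) x = s.2.1[j]) ∧
    (P.speaker s.1 s.2.1 = i → P.out s.1 (s.2.1 ++ [P.msg s.1 s.2.1 x]) = true)}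

theorem isVisCylinder_acceptCylinder (P : NProt k I Vis Bool a (d + 1))
    (s : (Fin a → Bool) × List.Vector Bool d) (i : Fin k) :
    IsVisCylinder (Vis i) (P.acceptCylinder s i) := by
  intro x x' hx
  have hmsg (t : List Bool) (ht : P.speaker s.1 t = i) : P.msg s.1 t x = P.msg s.1 t x' :=
    P.msg_nof s.1 t x x' (ht ▸ hx)
  refine and_congr (forall₃_congr fun j hj ht => ?_) (imp_congr_right fun ht => ?_)
  · rw [hmsg _ ht]
  · rw [hmsg _ ht]

theorem forall_mem_acceptCylinder_iff (P : NProt k I Vis Bool a (d + 1))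
    (s : (Fin a → Bool) × List.Vector Bool d) (x : I) :
    (∀ i, x ∈ P.acceptCylinder s i) ↔
      buildTranscript (fun t => P.msg s.1 t x) d = s.2.1 ∧ P.run s.1 x = true := by
  obtain ⟨p, τ, rfl⟩ := s
  have hτ : (∀ i, x ∈ P.acceptCylinder (p, ⟨τ, rfl⟩) i) ↔
      buildTranscript (fun t => P.msg p t x) τ.length = τ ∧
        P.out p (τ ++ [P.msg p τ x]) = true := by
    rw [buildTranscript_eq_iff _ rfl]
    simp only [acceptCylinder, Set.mem_ofPred_eq, forall_and, forall_eq']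
    exact and_congr_left' ⟨fun h j hj => h _ j hj rfl, fun h _ j hj _ => h j hj⟩
  rw [hτ]
  refine and_congr_right fun h => ?_
  simp only [run, buildTranscript, h]

theorem exists_run_eq_true_iff_exists_forall_mem_acceptCylinder
    (P : NProt k I Vis Bool a (d + 1)) (x : I) :
    (∃ p, P.run p x = true) ↔ ∃ s, ∀ i, x ∈ P.acceptCylinder s i := by
  simp only [forall_mem_acceptCylinder_iff]
  constructor
  · rintro ⟨p, hp⟩
    let τ : List.Vector Bool d :=
      ⟨buildTranscript (fun t => P.msg p t x) d, length_buildTranscript _ d⟩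
    exact ⟨(p, τ), rfl, hp⟩
  · rintro ⟨s, -, hs⟩
    exact ⟨s.1, hs⟩

end NProt

section Complexity

variable {k : ℕ} {I Y : Type} {Vis : Fin k → I → I → Prop} {A : I → Y} {S : Set I}

theorem exists_nprot_cost_eq_NCCbool [NeZero k] [Finite I] (hVis : ∀ i, Equivalence (Vis i))
    (hsep : ∀ x x', (∀ i, Vis i x x') → x = x') (f : I → Bool) :
    ∃ a c, NCCbool Vis f = a + c ∧
      ∃ P : NProt k I Vis Bool a c, ∀ x, f x = true ↔ ∃ p, P.run p x = true := by
  have := Fintype.ofFinite I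
  obtain ⟨P, hP⟩ := NProt.exists_forall_exists_run_eq_some_iff (Vis := Vis)
    (fun (y : {y // f y = true}) i => {x | Vis i x y})
    (fun y i x x' h => ⟨(hVis i).trans ((hVis i).symm h), (hVis i).trans h⟩)
  refine Nat.sInf_mem (s := {m | ∃ a c, m = a + c ∧
    ∃ P : NProt k I Vis Bool a c, ∀ x, f x = true ↔ ∃ p, P.run p x = true})
    ⟨_, _, _, rfl, P.map Option.isSome, fun x => ?_⟩
  calc f x = true
      ↔ ∃ y : {y // f y = true}, ∀ i, Vis i x y :=
        ⟨fun hx => ⟨⟨x, hx⟩, fun i => (hVis i).refl x⟩,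
          fun ⟨y, hy⟩ => hsep x y hy ▸ y.2⟩
    _ ↔ ∃ y, ∃ p, P.run p x = some y := exists_congr fun y => (hP x y).symm
    _ ↔ ∃ p, (P.run p x).isSome = true := by
        rw [exists_comm]
        simp only [Option.isSome_iff_exists]

theorem NCC_le_clog_card_add [NeZero k] [Fintype Y] (C : Y → Fin k → Set I)
    (hC : ∀ y i, IsVisCylinder (Vis i) (C y i))
    (hS : ∀ x ∈ S, ∀ y, (∀ i, x ∈ C y i) ↔ A x = y) :
    NCC Vis A S ≤ Nat.clog 2 (Fintype.card Y) + k := by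
  obtain ⟨P, hP⟩ := NProt.exists_forall_exists_run_eq_some_iff C hC
  refine Nat.sInf_le ⟨_, _, rfl, P, fun x hx => ⟨fun p => ?_, ?_⟩⟩
  · cases hrun : P.run p x with
    | none => exact Or.inl rfl
    | some y => rw [(hS x hx y).1 ((hP x y).1 ⟨p, hrun⟩)]; exact Or.inr rfl
  · exact (hP x (A x)).2 ((hS x hx (A x)).2 rfl)

theorem NCC_eq_zero_of_subsingleton_image [NeZero k] (hA : (A '' S).Subsingleton) :
    NCC Vis A S = 0 := by
  obtain ⟨o, ho⟩ : ∃ o, ∀ x ∈ S, o = some (A x) := by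
    obtain rfl | ⟨x₀, hx₀⟩ := S.eq_empty_or_nonempty
    · exact ⟨none, by simp⟩
    · exact ⟨some (A x₀), fun x hx =>
        congrArg some (hA (Set.mem_image_of_mem A hx₀) (Set.mem_image_of_mem A hx))⟩
  let P : NProt k I Vis (Option Y) 0 0 :=
    { speaker := fun _ _ => 0
      msg := fun _ _ _ => true
      msg_nof := fun _ _ _ _ _ => rfl
      out := fun _ _ => o }
  exact Nat.le_zero.1 <| Nat.sInf_le
    ⟨0, 0, rfl, P, fun x hx => ⟨fun _ => Or.inr (ho x hx), Fin.elim0, ho x hx⟩⟩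

theorem NHelp_le_add {T : Type*} [Fintype T] {b t B : ℕ} (htb : t ≤ b)
    (hT : Fintype.card T = 2 ^ t) (H : I → T) (hB : ∀ i, NCC Vis A (H ⁻¹' {i}) ≤ B) :
    NHelp Vis A b ≤ t + B := by
  let e : T ≃ Fin (2 ^ t) := Fintype.equivFinOfCardEq hT
  have hle : NHelp Vis A b ≤ t + Finset.univ.sup fun i => NCC Vis A (e ∘ H ⁻¹' {i}) :=
    Nat.sInf_le ⟨t, htb, e ∘ H, rfl⟩
  refine hle.trans (Nat.add_le_add_left (Finset.sup_le fun i _ => ?_) t)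
  have hpre : e ∘ H ⁻¹' {i} = H ⁻¹' {e.symm i} := by
    ext x
    simp [Equiv.eq_symm_apply]
  rw [hpre]
  exact hB _

theorem NHelp_eq_zero_of_forall_eq [NeZero k] (hA : ∀ x x', A x = A x') (b : ℕ) :
    NHelp Vis A b = 0 := by
  refine Nat.le_zero.1 <| NHelp_le_add (T := Unit) (B := 0) (Nat.zero_le b) rfl (fun _ => ())
    fun _ => (NCC_eq_zero_of_subsingleton_image ?_).le
  rintro _ ⟨x, -, rfl⟩ _ ⟨x', -, rfl⟩
  exact hA x x'

end Complexity

section GraphFunction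

variable {K : ℕ} {W Z : Type}

theorem equivalence_liftVis (k : ℕ) (i : Fin k) : Equivalence (liftVis k W Z i) where
  refl _ := ⟨fun _ _ => rfl, Or.inr rfl⟩
  symm h := ⟨fun j hj => (h.1 j hj).symm, h.2.imp_right Eq.symm⟩
  trans h h' := ⟨fun j hj => (h.1 j hj).trans (h'.1 j hj),
    h.2.elim Or.inl fun hz => h'.2.imp_right hz.trans⟩

theorem liftVis_last (x : Fin K → W) (y y' : Z) :
    liftVis (K + 1) W Z (Fin.last K) (x, y) (x, y') :=
  ⟨fun _ _ => rfl, Or.inl rfl⟩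

theorem liftVis_castSucc {j : Fin K} {x x' : Fin K → W} (h : nofVis K W j x x') (y : Z) :
    liftVis (K + 1) W Z j.castSucc (x, y) (x', y) :=
  ⟨fun i hi => h i fun hij => hi (congrArg Fin.val hij), Or.inr rfl⟩

theorem eq_of_forall_liftVis [NeZero K] {z z' : (Fin K → W) × Z}
    (h : ∀ i, liftVis (K + 1) W Z i z z') : z = z' :=
  Prod.ext (funext fun j => (h (Fin.last K)).1 j j.isLt.ne)
    ((h (Fin.castSucc 0)).2.resolve_left (NeZero.ne' K))

theorem forall_eq_of_nprot_zero {a : ℕ} {A : (Fin K → W) → Z}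
    (P : NProt (K + 1) _ (liftVis (K + 1) W Z) Bool a 0)
    (hP : ∀ x y, (∃ p, P.run p (x, y) = true) ↔ A x = y) (x x' : Fin K → W) : A x = A x' :=
  have hrun : ∃ p, P.run p (x, A x) = true := (hP x (A x)).2 rfl
  (hP x (A x')).1 hrun

variable [NeZero K] [Fintype Z] {A : (Fin K → W) → Z} {b : ℕ}

theorem NHelp_le_of_cylinder_cover {T : Type*} [Fintype T] {t : ℕ} (htb : t ≤ b)
    (hT : Fintype.card T = 2 ^ t) (C : T → Fin (K + 1) → Set ((Fin K → W) × Z))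
    (hC : ∀ s i, IsVisCylinder (liftVis (K + 1) W Z i) (C s i))
    (hgraph : ∀ x y, (∃ s, ∀ i, (x, y) ∈ C s i) ↔ A x = y) :
    NHelp (nofVis K W) A b ≤ t + (Nat.clog 2 (Fintype.card Z) + K) := by
  choose help hhelp using fun x => (hgraph x (A x)).2 rfl
  refine NHelp_le_add htb hT help fun s => ?_
  refine NCC_le_clog_card_add (fun y j => {x | (x, y) ∈ C s j.castSucc})
    (fun y j x x' h => hC s _ _ _ (liftVis_castSucc h y)) ?_
  rintro x rfl y
  refine ⟨fun h => (hgraph x y).1 ⟨help x, Fin.forall_fin_succ'.2 ⟨h, ?_⟩⟩, ?_⟩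
  · exact (hC _ _ _ _ (liftVis_last x (A x) y)).1 (hhelp x _)
  · rintro rfl j
    exact hhelp x j.castSucc

variable {a c d : ℕ}

theorem NHelp_le_of_nprot_succ (P : NProt (K + 1) _ (liftVis (K + 1) W Z) Bool a (d + 1))
    (hP : ∀ x y, (∃ p, P.run p (x, y) = true) ↔ A x = y) (hb : a + d ≤ b) :
    NHelp (nofVis K W) A b ≤ a + d + (Nat.clog 2 (Fintype.card Z) + K) :=
  NHelp_le_of_cylinder_cover hb (by simp [pow_add]) P.acceptCylinder
    P.isVisCylinder_acceptCylinder fun x y =>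
      (P.exists_run_eq_true_iff_exists_forall_mem_acceptCylinder (x, y)).symm.trans (hP x y)

theorem NHelp_le_add_logb (P : NProt (K + 1) _ (liftVis (K + 1) W Z) Bool a c)
    (hP : ∀ x y, (∃ p, P.run p (x, y) = true) ↔ A x = y) (hb : a + c ≤ b) :
    (NHelp (nofVis K W) A b : ℝ) ≤ (a + c : ℕ) + Real.logb 2 (Fintype.card Z) + K := by
  have hlog : 0 ≤ Real.logb 2 (Fintype.card Z) := by
    obtain hZ | hZ := Nat.eq_zero_or_pos (Fintype.card Z)
    · simp [hZ]
    · exact Real.logb_nonneg one_lt_two (mod_cast hZ)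
  cases c with
  | zero =>
    rw [NHelp_eq_zero_of_forall_eq (forall_eq_of_nprot_zero P hP), Nat.cast_zero]
    positivity
  | succ d =>
    have hnat : (NHelp (nofVis K W) A b : ℝ) ≤ a + d + (Nat.clog 2 (Fintype.card Z) + K) :=
      mod_cast NHelp_le_of_nprot_succ P hP (by omega)
    have hclog : (Nat.clog 2 (Fintype.card Z) : ℝ) < Real.logb 2 (Fintype.card Z) + 1 := by
      rw [← Real.natCeil_logb_natCast]
      exact_mod_cast Nat.ceil_lt_add_one hlog
    push_cast
    linarith

end GraphFunction

/-- Let `k ≥ 2` and let `f : [n]^{k-1} × [N] → {0,1}` be a graph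
function with base function `A = Base f`.  Then for every natural number `b`,
`N¹_k(f) ≥ min { N^h_{k-1,b}(A) - log₂ N - k + 1 , b }`. -/
theorem graph_fn_lower_bound_nondet_help (k n N b : ℕ) (hk : 2 ≤ k)
    (f : (Fin (k - 1) → Fin n) × Fin N → Bool)
    (A : (Fin (k - 1) → Fin n) → Fin N)
    (hf : ∀ x y, f (x, y) = true ↔ A x = y) :
    (NCCbool (liftVis k (Fin n) (Fin N)) f : ℝ) ≥
      min ((NHelp (nofVis (k - 1) (Fin n)) A b : ℝ) - Real.logb 2 (N : ℝ) - (k : ℝ) + 1)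
        (b : ℝ) := by
  obtain ⟨K, rfl⟩ := Nat.exists_eq_add_of_le' hk
  obtain ⟨a, c, hcost, P, hP⟩ := exists_nprot_cost_eq_NCCbool
    (equivalence_liftVis (W := Fin n) (Z := Fin N) (K + 2))
    (fun _ _ => eq_of_forall_liftVis (K := K + 1)) f
  have hgraph (x : Fin (K + 1) → Fin n) (y : Fin N) :
      (∃ p, P.run p (x, y) = true) ↔ A x = y := (hP (x, y)).symm.trans (hf x y)
  rw [hcost]
  obtain hb | hb := le_total b (a + c)
  · exact min_le_of_right_le (mod_cast hb)
  · have hhelp : (NHelp (nofVis (K + 2 - 1) (Fin n)) A b : ℝ) ≤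
        a + c + Real.logb 2 N + (K + 1) := by
      simpa using NHelp_le_add_logb (K := K + 1) P hgraph hb
    refine min_le_of_left_le ?_
    push_cast
    linarith
end
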